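/- Let 𝚫 ∈ 𝒜 and let 𝒪₁, …, 𝒪_m be the pairwise distinct triangles in 𝚫 (i.e. all of them). If α_i ∈ 𝒪_i for each i ∈ [1,m] and 𝚫' := 𝚫 ∖ {α₁,…,α_m}, then 𝚫' is a gentle quiver of tree type. -/

import Mathlib

/-! Common formalization infrastructure for gentle quivers (Bobinski–Buan,
    "Derived equivalence classification of gentle cluster tilted algebras"). -/

/-- A (finite) quiver with (length-two, monomial) relations.  Vertices and
arrows are natural numbers; `V` and `A` are the finite sets of vertices and
arrows, `src`/`tgt` give the start and terminus of each arrow, and `rel` is the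
set of relations, a relation `(a, b)` standing for the length-two path
`a·b` (so `src a = tgt b`). -/
structure QuivRel where
  V : Finset ℕ
  A : Finset ℕ
  src : ℕ → ℕ
  tgt : ℕ → ℕ
  rel : Finset (ℕ × ℕ)

namespace GentleQuiv

/-- Two vertices are adjacent if some arrow joins them (in either direction). -/
def Adj (Q : QuivRel) (x y : ℕ) : Prop :=
  ∃ a ∈ Q.A, (Q.src a = x ∧ Q.tgt a = y) ∨ (Q.src a = y ∧ Q.tgt a = x)

/-- A quiver is connected if any two of its vertices are joined by a walk. -/
def Connected (Q : QuivRel) : Prop :=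
  ∀ x ∈ Q.V, ∀ y ∈ Q.V, Relation.ReflTransGen (Adj Q) x y

/-- `l = [α₁, …, αₙ]` is a (nonempty) path in the quiver: consecutive arrows
compose, i.e. `s αᵢ = t αᵢ₊₁`. -/
def IsPathList (Q : QuivRel) (l : List ℕ) : Prop :=
  l ≠ [] ∧ (∀ a ∈ l, a ∈ Q.A) ∧ l.Chain' (fun a b => Q.src a = Q.tgt b)

/-- The path `l` contains a subpath (two consecutive arrows) lying in `R`. -/
def HasRelSubpath (Q : QuivRel) (l : List ℕ) : Prop :=
  ∃ a b, (a, b) ∈ Q.rel ∧ [a, b] <:+: l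

/-- Gentle quiver: connected, relations are composable pairs of arrows, at most
two arrows in/out of every vertex, the usual gentleness conditions on
relations, and a global bound forcing finite dimensionality. -/
def IsGentle (Q : QuivRel) : Prop :=
  Q.V.Nonempty ∧
  (∀ a ∈ Q.A, Q.src a ∈ Q.V ∧ Q.tgt a ∈ Q.V) ∧
  Connected Q ∧
  (∀ ρ ∈ Q.rel, ρ.1 ∈ Q.A ∧ ρ.2 ∈ Q.A ∧ Q.src ρ.1 = Q.tgt ρ.2) ∧
  (∀ x, (Q.A.filter fun a => Q.src a = x).card ≤ 2) ∧
  (∀ x, (Q.A.filter fun a => Q.tgt a = x).card ≤ 2) ∧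
  (∀ a ∈ Q.A, (Q.A.filter fun b => Q.src b = Q.tgt a ∧ (b, a) ∉ Q.rel).card ≤ 1) ∧
  (∀ a ∈ Q.A, (Q.A.filter fun c => Q.tgt c = Q.src a ∧ (a, c) ∉ Q.rel).card ≤ 1) ∧
  (∀ a ∈ Q.A, (Q.A.filter fun b => (b, a) ∈ Q.rel).card ≤ 1) ∧
  (∀ a ∈ Q.A, (Q.A.filter fun c => (a, c) ∈ Q.rel).card ≤ 1) ∧
  (∃ n : ℕ, ∀ l : List ℕ, IsPathList Q l → l.length = n → HasRelSubpath Q l)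

/-- A choice of functions `σ, τ : Δ₁ → {±1}` as in Avella-Alaminos–Geiss. -/
structure SigmaTau (Q : QuivRel) where
  σ : ℕ → ℤ
  τ : ℕ → ℤ
  σ_pm : ∀ a ∈ Q.A, σ a = 1 ∨ σ a = -1
  τ_pm : ∀ a ∈ Q.A, τ a = 1 ∨ τ a = -1
  σ_src : ∀ a ∈ Q.A, ∀ b ∈ Q.A, a ≠ b → Q.src a = Q.src b → σ a = -σ b
  τ_tgt : ∀ a ∈ Q.A, ∀ b ∈ Q.A, a ≠ b → Q.tgt a = Q.tgt b → τ a = -τ b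
  rel_iff : ∀ a ∈ Q.A, ∀ b ∈ Q.A, Q.src a = Q.tgt b → ((a, b) ∈ Q.rel ↔ σ a = τ b)

/-- A thread: either a trivial path/antipath `1_{x,ε}` at a vertex `x` with a
sign `ε`, or a sequence of arrows of positive length. -/
inductive Thread where
  | triv (x : ℕ) (ε : ℤ) : Thread
  | arrows (l : List ℕ) : Thread
deriving DecidableEq

/-- Source of a thread. -/
def Thread.source (Q : QuivRel) : Thread → ℕ
  | .triv x _ => x
  | .arrows l => Q.src l.getLast!

/-- Target of a thread. -/
def Thread.target (Q : QuivRel) : Thread → ℕ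
  | .triv x _ => x
  | .arrows l => Q.tgt l.head!

/-- `σω` (for paths and antipaths alike; `σ 1_{x,ε} = ε = σ 1'_{x,ε}`). -/
def Thread.sigma {Q : QuivRel} (st : SigmaTau Q) : Thread → ℤ
  | .triv _ ε => ε
  | .arrows l => st.σ l.getLast!

/-- `τω` when `ω` is regarded as a path (`τ 1_{x,ε} = -ε`). -/
def Thread.tauPath {Q : QuivRel} (st : SigmaTau Q) : Thread → ℤ
  | .triv _ ε => -ε
  | .arrows l => st.τ l.head!

/-- `τω` when `ω` is regarded as an antipath (`τ 1'_{x,ε} = ε`). -/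
def Thread.tauAnti {Q : QuivRel} (st : SigmaTau Q) : Thread → ℤ
  | .triv _ ε => ε
  | .arrows l => st.τ l.head!

/-- Length of a thread. -/
def Thread.len : Thread → ℕ
  | .triv _ _ => 0
  | .arrows l => l.length

/-- A path in `𝚫` of positive length (no two consecutive arrows in `R`). -/
def IsPermList (Q : QuivRel) (l : List ℕ) : Prop :=
  IsPathList Q l ∧ l.Chain' (fun a b => (a, b) ∉ Q.rel)

/-- An antipath in `𝚫` of positive length (all consecutive pairs in `R`). -/
def IsAntiList (Q : QuivRel) (l : List ℕ) : Prop :=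
  l ≠ [] ∧ (∀ a ∈ l, a ∈ Q.A) ∧ l.Chain' (fun a b => (a, b) ∈ Q.rel)

/-- A thread is a path in `𝚫` (including trivial ones). -/
def IsPathThread (Q : QuivRel) : Thread → Prop
  | .triv x ε => x ∈ Q.V ∧ (ε = 1 ∨ ε = -1)
  | .arrows l => IsPermList Q l

/-- A thread is an antipath in `𝚫` (including trivial ones). -/
def IsAntiThread (Q : QuivRel) : Thread → Prop
  | .triv x ε => x ∈ Q.V ∧ (ε = 1 ∨ ε = -1)
  | .arrows l => IsAntiList Q l

/-- `w ∈ ℳ`: `w` is a maximal path of `𝚫`. -/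
def InM (Q : QuivRel) (st : SigmaTau Q) (w : Thread) : Prop :=
  IsPathThread Q w ∧
  (¬ ∃ a ∈ Q.A, Q.src a = w.target Q ∧ st.σ a = -(w.tauPath st)) ∧
  (¬ ∃ b ∈ Q.A, Q.tgt b = w.source Q ∧ st.τ b = -(w.sigma st))

/-- `w ∈ 𝒩`: `w` is a maximal antipath of `𝚫`. -/
def InN (Q : QuivRel) (st : SigmaTau Q) (w : Thread) : Prop :=
  IsAntiThread Q w ∧
  (¬ ∃ a ∈ Q.A, Q.src a = w.target Q ∧ st.σ a = w.tauAnti st) ∧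
  (¬ ∃ b ∈ Q.A, Q.tgt b = w.source Q ∧ st.τ b = w.sigma st)

/-- The graph of the bijection `Φ = φ ∘ ψ : 𝒩 → 𝒩`:  `PhiRel Q st w w'` holds
iff `w, w' ∈ 𝒩` and the maximal path `ψ w` (with `s(ψw) = sw`, `σ(ψw) = -σw`)
satisfies `t w' = t (ψ w)` and `τ w' = -τ(ψ w)`, i.e. `w' = φ (ψ w) = Φ w`. -/
def PhiRel (Q : QuivRel) (st : SigmaTau Q) (w w' : Thread) : Prop :=
  InN Q st w ∧ InN Q st w' ∧
  ∃ m : Thread, InM Q st m ∧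
    m.source Q = w.source Q ∧ m.sigma st = -(w.sigma st) ∧
    w'.target Q = m.target Q ∧ w'.tauAnti st = -(m.tauPath st)

/-- `O` is an orbit of the `ℤ`-action on `𝒩` induced by `Φ`. -/
def NOrbit (Q : QuivRel) (st : SigmaTau Q) (O : Set Thread) : Prop :=
  ∃ w, InN Q st w ∧ O = {w' | Relation.EqvGen (PhiRel Q st) w w'}

/-- `p(𝒪) = |𝒪|` for an orbit `𝒪 ∈ 𝒩/ℤ`. -/
noncomputable def pN (O : Set Thread) : ℕ := O.ncard

/-- `q(𝒪) = Σ_{ω ∈ 𝒪} ℓ(ω)` for an orbit `𝒪 ∈ 𝒩/ℤ`. -/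
noncomputable def qN (O : Set Thread) : ℕ := ∑ᶠ w ∈ O, Thread.len w

/-- `a ∈ 𝒞`: the arrow `a` occurs in no maximal antipath. -/
def InC (Q : QuivRel) (st : SigmaTau Q) (a : ℕ) : Prop :=
  a ∈ Q.A ∧ ¬ ∃ l : List ℕ, InN Q st (.arrows l) ∧ a ∈ l

/-- The graph of the bijection `Ψ : 𝒞 → 𝒞`. -/
def PsiRel (Q : QuivRel) (st : SigmaTau Q) (a b : ℕ) : Prop :=
  InC Q st a ∧ InC Q st b ∧ Q.tgt b = Q.src a ∧ st.τ b = st.σ a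

/-- `O` is an orbit of the `ℤ`-action on `𝒞` induced by `Ψ`. -/
def COrbit (Q : QuivRel) (st : SigmaTau Q) (O : Set ℕ) : Prop :=
  ∃ a, InC Q st a ∧ O = {b | Relation.EqvGen (PsiRel Q st) a b}

/-- The Avella-Alaminos–Geiss invariant `f_𝚫 : ℕ² → ℕ`:  `f_𝚫 (p,q)` counts the
orbits `𝒪 ∈ 𝒩/ℤ ⊔ 𝒞/ℤ` with `p(𝒪) = p` and `q(𝒪) = q`. -/
noncomputable def fInv (Q : QuivRel) (st : SigmaTau Q) : ℕ × ℕ → ℕ := fun pq =>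
  {O : Set Thread | NOrbit Q st O ∧ pN O = pq.1 ∧ qN O = pq.2}.ncard +
  {O : Set ℕ | COrbit Q st O ∧ pq.1 = 0 ∧ O.ncard = pq.2}.ncard

/-- `[p, q] : ℕ² → ℕ`, the characteristic function of `{(p, q)}`. -/
def charFn (p q : ℕ) : ℕ × ℕ → ℕ := fun pq => if pq = (p, q) then 1 else 0

/-- Tree type: `|Δ₀| = |Δ₁| + 1`. -/
def TreeType (Q : QuivRel) : Prop := Q.V.card = Q.A.card + 1

/-- Removing a set of arrows (keeping all vertices); relations containing a
removed arrow are discarded. -/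
def deleteArrows (Q : QuivRel) (S : Finset ℕ) : QuivRel where
  V := Q.V
  A := Q.A \ S
  src := Q.src
  tgt := Q.tgt
  rel := Q.rel.filter fun ρ => ρ.1 ∉ S ∧ ρ.2 ∉ S

/-- Branch arrow: removing it disconnects the quiver. -/
def BranchArrow (Q : QuivRel) (a : ℕ) : Prop :=
  a ∈ Q.A ∧ ¬ Connected (deleteArrows Q {a})

/-- Cycle arrow: removing it leaves the quiver connected. -/
def CycleArrow (Q : QuivRel) (a : ℕ) : Prop :=
  a ∈ Q.A ∧ Connected (deleteArrows Q {a})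

/-- Branch relation: a relation one of whose arrows is a branch arrow. -/
def BranchRel (Q : QuivRel) (ρ : ℕ × ℕ) : Prop :=
  ρ ∈ Q.rel ∧ (BranchArrow Q ρ.1 ∨ BranchArrow Q ρ.2)

/-- A relation `ρ = (α, β)` is isolated if the antipath `(α, β)` is a maximal
antipath, i.e. `ρ ∈ 𝒩`. -/
def Isolated (Q : QuivRel) (st : SigmaTau Q) (ρ : ℕ × ℕ) : Prop :=
  ρ ∈ Q.rel ∧ InN Q st (.arrows [ρ.1, ρ.2])

/-- `Q'` is obtained from `Q` by completing the relations from `R₀`, the new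
arrow attached to `ρ ∈ R₀` being `γ ρ`. -/
structure IsCompletion (Q : QuivRel) (R0 : Finset (ℕ × ℕ)) (γ : ℕ × ℕ → ℕ)
    (Q' : QuivRel) : Prop where
  subset : R0 ⊆ Q.rel
  fresh : ∀ ρ ∈ R0, γ ρ ∉ Q.A
  inj : ∀ ρ ∈ R0, ∀ ρ' ∈ R0, γ ρ = γ ρ' → ρ = ρ'
  V_eq : Q'.V = Q.V
  A_eq : Q'.A = Q.A ∪ R0.image γ
  src_old : ∀ a ∈ Q.A, Q'.src a = Q.src a
  tgt_old : ∀ a ∈ Q.A, Q'.tgt a = Q.tgt a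
  src_new : ∀ ρ ∈ R0, Q'.src (γ ρ) = Q.tgt ρ.1
  tgt_new : ∀ ρ ∈ R0, Q'.tgt (γ ρ) = Q.src ρ.2
  rel_eq : Q'.rel = Q.rel ∪ R0.image (fun ρ => (γ ρ, ρ.1)) ∪
      R0.image (fun ρ => (ρ.2, γ ρ))

/-- A 3-cycle: three pairwise distinct arrows forming an oriented cycle. -/
def Is3Cycle (Q : QuivRel) (a0 a1 a2 : ℕ) : Prop :=
  a0 ∈ Q.A ∧ a1 ∈ Q.A ∧ a2 ∈ Q.A ∧ a0 ≠ a1 ∧ a1 ≠ a2 ∧ a0 ≠ a2 ∧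
  Q.src a0 = Q.tgt a1 ∧ Q.src a1 = Q.tgt a2 ∧ Q.src a2 = Q.tgt a0

/-- A triangle: a 3-cycle all of whose three compositions are relations. -/
def IsTriangleTriple (Q : QuivRel) (a0 a1 a2 : ℕ) : Prop :=
  Is3Cycle Q a0 a1 a2 ∧ (a0, a1) ∈ Q.rel ∧ (a1, a2) ∈ Q.rel ∧ (a2, a0) ∈ Q.rel

/-- The (unordered) set of arrows of a triangle. -/
def TriangleSet (Q : QuivRel) (O : Finset ℕ) : Prop :=
  ∃ a0 a1 a2, O = {a0, a1, a2} ∧ IsTriangleTriple Q a0 a1 a2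

/-- Branch triangle: removing any two of its arrows disconnects the quiver. -/
def BranchTriangle (Q : QuivRel) (O : Finset ℕ) : Prop :=
  TriangleSet Q O ∧ ∀ S ⊆ O, S.card = 2 → ¬ Connected (deleteArrows Q S)

/-- Free relation: a relation neither of whose arrows lies in `𝒞`. -/
def FreeRel (Q : QuivRel) (st : SigmaTau Q) (ρ : ℕ × ℕ) : Prop :=
  ρ ∈ Q.rel ∧ ¬ InC Q st ρ.1 ∧ ¬ InC Q st ρ.2

/-- The class `𝒜`: gentle quivers with `f_𝚫 = m·[0,3] + [p+m+2, p]`. -/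
def ClassA (Q : QuivRel) (st : SigmaTau Q) : Prop :=
  IsGentle Q ∧ ∃ m p : ℕ, ∀ x, fInv Q st x = m * charFn 0 3 x + charFn (p + m + 2) p x

/-- The class `Ã`: gentle quivers with
`f_𝚫 = (m₁+m₂)·[0,3] + [p+m₁, p] + [q+m₂, q]`, `p+m₁ > 0`, `q+m₂ > 0`. -/
def ClassAtilde (Q : QuivRel) (st : SigmaTau Q) : Prop :=
  IsGentle Q ∧ ∃ m1 m2 p q : ℕ, 0 < p + m1 ∧ 0 < q + m2 ∧
    ∀ x, fInv Q st x =
      (m1 + m2) * charFn 0 3 x + charFn (p + m1) p x + charFn (q + m2) q x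

/-- Isomorphism of quivers with relations. -/
def IsoQR (Q Q' : QuivRel) : Prop :=
  ∃ fV fA : ℕ → ℕ,
    Set.BijOn fV ↑Q.V ↑Q'.V ∧ Set.BijOn fA ↑Q.A ↑Q'.A ∧
    (∀ a ∈ Q.A, Q'.src (fA a) = fV (Q.src a) ∧ Q'.tgt (fA a) = fV (Q.tgt a)) ∧
    (∀ a ∈ Q.A, ∀ b ∈ Q.A, ((a, b) ∈ Q.rel ↔ (fA a, fA b) ∈ Q'.rel))

/-- The quiver has no loops. -/
def NoLoops (Q : QuivRel) : Prop := ∀ a ∈ Q.A, Q.src a ≠ Q.tgt a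

/-- The reflection at `x` is defined: every arrow starting at `x` admits a
(necessarily unique) companion arrow ending at `x` not bound by a relation. -/
def CanReflect (Q : QuivRel) (x : ℕ) : Prop :=
  x ∈ Q.V ∧ ∀ a ∈ Q.A, Q.src a = x → ∃ b ∈ Q.A, Q.tgt b = x ∧ (a, b) ∉ Q.rel

/-- `Q'` is the reflection of the gentle loop-free quiver `Q` at the vertex
`x`, following Brenner–Butler tilting. -/
def IsReflection (Q : QuivRel) (x : ℕ) (Q' : QuivRel) : Prop :=
  IsGentle Q ∧ NoLoops Q ∧ CanReflect Q x ∧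
  Q'.V = Q.V ∧ Q'.A = Q.A ∧
  (∀ a ∈ Q.A, Q.tgt a = x → Q'.src a = x ∧ Q'.tgt a = Q.src a) ∧
  (∀ a ∈ Q.A, Q.src a = x →
    ∀ b ∈ Q.A, Q.tgt b = x → (a, b) ∉ Q.rel → Q'.src a = Q.src b) ∧
  (∀ a ∈ Q.A, Q.tgt a ≠ x → Q.src a ≠ x → Q'.src a = Q.src a) ∧
  (∀ a ∈ Q.A, Q.tgt a ≠ x →
    ((∃ b ∈ Q.A, Q.tgt b = x ∧ Q.src b = Q.tgt a ∧ (b, a) ∈ Q.rel) → Q'.tgt a = x) ∧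
    ((¬ ∃ b ∈ Q.A, Q.tgt b = x ∧ Q.src b = Q.tgt a ∧ (b, a) ∈ Q.rel) →
      Q'.tgt a = Q.tgt a)) ∧
  (∀ a b : ℕ, (a, b) ∈ Q'.rel ↔
    (((a, b) ∈ Q.rel ∧ Q.tgt a ≠ x ∧ Q.src a ≠ x) ∨
     (a ∈ Q.A ∧ b ∈ Q.A ∧ Q.src a = x ∧ Q.tgt b = x ∧ (a, b) ∉ Q.rel) ∨
     (a ∈ Q.A ∧ b ∈ Q.A ∧ Q.tgt a = x ∧
       ∃ c ∈ Q.A, c ≠ a ∧ Q.tgt c = x ∧ Q.src c = Q.tgt b ∧ (c, b) ∈ Q.rel)))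

/-- The opposite quiver with relations. -/
def opQR (Q : QuivRel) : QuivRel where
  V := Q.V
  A := Q.A
  src := Q.tgt
  tgt := Q.src
  rel := Q.rel.image fun ρ => (ρ.2, ρ.1)

/-- Coreflection: the dual of reflection. -/
def IsCoreflection (Q : QuivRel) (x : ℕ) (Q' : QuivRel) : Prop :=
  IsReflection (opQR Q) x (opQR Q')

/-- One step of reflection equivalence: a reflection, a coreflection, or an
isomorphism of quivers with relations. -/
def RefStep (Q Q' : QuivRel) : Prop :=
  (∃ x, IsReflection Q x Q') ∨ (∃ x, IsCoreflection Q x Q') ∨ IsoQR Q Q'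

/-- Reflection equivalence: a finite sequence of reflections/coreflections,
up to isomorphism of quivers with relations. -/
def RefEquiv : QuivRel → QuivRel → Prop := Relation.ReflTransGen RefStep

/-- A cyclic orientation of a `1`-cycle quiver without branch arrows (i.e. a
cycle): enumerations of the vertices and arrows by `ZMod n` such that the
`i`-th arrow joins the `i`-th and `(i+1)`-st vertices. -/
structure CyclicOrientation (Q : QuivRel) (n : ℕ) where
  ev : ZMod n → ℕ
  ea : ZMod n → ℕ
  ev_mem : ∀ i, ev i ∈ Q.V
  ea_mem : ∀ i, ea i ∈ Q.A
  ev_inj : Function.Injective ev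
  ea_inj : Function.Injective ea
  ev_surj : ∀ v ∈ Q.V, ∃ i, ev i = v
  ea_surj : ∀ a ∈ Q.A, ∃ i, ea i = a
  compat : ∀ i : ZMod n,
    (Q.src (ea i) = ev i ∧ Q.tgt (ea i) = ev (i + 1)) ∨
    (Q.src (ea i) = ev (i + 1) ∧ Q.tgt (ea i) = ev i)

/-- Clockwise arrow with respect to a cyclic orientation. -/
def Clockwise (Q : QuivRel) {n : ℕ} (co : CyclicOrientation Q n) (a : ℕ) : Prop :=
  a ∈ Q.A ∧ ∃ i : ZMod n, co.ea i = a ∧ Q.src a = co.ev i ∧ Q.tgt a = co.ev (i + 1)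

/-- Anticlockwise arrow with respect to a cyclic orientation. -/
def Anticlockwise (Q : QuivRel) {n : ℕ} (co : CyclicOrientation Q n) (a : ℕ) : Prop :=
  a ∈ Q.A ∧ ∃ i : ZMod n, co.ea i = a ∧ Q.src a = co.ev (i + 1) ∧ Q.tgt a = co.ev i

end GentleQuiv

namespace GentleQuiv

/-!
A vertex `x` and a sign `ε` determine at most one arrow `α` with `(sα, σα) = (x, ε)`, and the
maximal antipaths end in pairwise distinct pairs `(x, ε)` from which no arrow starts in this sense,
so `|𝒩| + |Δ₁| ≤ 2|Δ₀|`. Every arrow lies on a maximal antipath or in `𝒞`, so `|Δ₁|` is at most the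
sum of all `q(𝒪)`. If `f_𝚫 = m·[0,3] + [p+m+2,p]`, these bounds read `p + m + 2 + |Δ₁| ≤ 2|Δ₀|` and
`|Δ₁| ≤ p + 3m`, and adding them gives `|Δ₁| + 1 ≤ |Δ₀| + m`.

An orbit of size `3` in `𝒞` is a triangle, so at least `m` arrows are removed, and the remaining
quiver has fewer arrows than vertices. It is still connected, because triangles are disjoint and the
two other arrows of a triangle rejoin the ends of the removed one; hence `|Δ₀| ≤ |Δ₁'| + 1` for its
set of arrows `Δ₁'`, which is the reverse inequality.
-/

section Relations

variable {α : Type*} {R : α → α → Prop}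

theorem iff_of_eqvGen {p : α → Prop} (h : ∀ x y, R x y → (p x ↔ p y)) {a b : α}
    (hab : Relation.EqvGen R a b) : p a ↔ p b :=
  (Equivalence.eqvGen_iff (r := fun x y => p x ↔ p y) ⟨fun _ => .rfl, .symm, .trans⟩).1
    (hab.mono h)

theorem setOf_eqvGen_subset_pair (hR : Relator.BiUnique R) {a b : α} (hab : R a b)
    (hba : R b a) : {x | Relation.EqvGen R a x} ⊆ {a, b} := by
  have hclosed : ∀ x y, R x y → (x ∈ ({a, b} : Set α) ↔ y ∈ ({a, b} : Set α)) := by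
    intro x y hxy
    constructor
    · rintro (rfl | rfl)
      · exact .inr (hR.2 hxy hab)
      · exact .inl (hR.2 hxy hba)
    · rintro (rfl | rfl)
      · exact .inr (hR.1 hxy hba)
      · exact .inl (hR.1 hxy hab)
  exact fun x hx => (iff_of_eqvGen hclosed hx).1 (.inl rfl)

theorem exists_three_cycle_of_ncard_eq_three (hR : Relator.BiUnique R) {a : α}
    (hsucc : ∀ x, Relation.EqvGen R a x → ∃ y, R x y)
    (hcard : {x | Relation.EqvGen R a x}.ncard = 3) :
    ∃ b c, {x | Relation.EqvGen R a x} = {a, b, c} ∧ (a ≠ b ∧ b ≠ c ∧ a ≠ c) ∧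
      R a b ∧ R b c ∧ R c a := by
  obtain ⟨b, hab⟩ := hsucc a (.refl a)
  have orb_b : Relation.EqvGen R a b := .rel _ _ hab
  obtain ⟨c, hbc⟩ := hsucc b orb_b
  have orb_c : Relation.EqvGen R a c := orb_b.trans _ _ _ (.rel _ _ hbc)
  obtain ⟨d, hcd⟩ := hsucc c orb_c
  have orb_d : Relation.EqvGen R a d := orb_c.trans _ _ _ (.rel _ _ hcd)
  have hac : a ≠ c := by
    rintro rfl
    have horbit := Set.ncard_le_ncard (setOf_eqvGen_subset_pair hR hab hbc)
    have hpair : ({a, b} : Set α).ncard ≤ 2 := (Set.ncard_insert_le _ _).trans (by simp)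
    omega
  have hne_ab : a ≠ b := by
    rintro rfl
    exact hac (hR.2 hab hbc)
  have hne_bc : b ≠ c := by
    rintro rfl
    exact hne_ab (hR.1 hab hbc)
  have horbit : {x | Relation.EqvGen R a x} = {a, b, c} := by
    refine (Set.eq_of_subset_of_ncard_le ?_ ?_ (Set.finite_of_ncard_ne_zero (by omega))).symm
    · rintro x (rfl | rfl | rfl)
      exacts [.refl _, orb_b, orb_c]
    · rw [hcard, Set.ncard_eq_three.2 ⟨a, b, c, hne_ab, hac, hne_bc, rfl⟩]
  have hda : d = a := by
    rcases (horbit ▸ orb_d : d ∈ ({a, b, c} : Set α)) with hd | rfl | rfl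
    · exact hd
    · exact absurd (hR.1 hab hcd) hac
    · exact absurd (hR.1 hbc hcd) hne_bc
  exact ⟨b, c, horbit, ⟨hne_ab, hne_bc, hac⟩, hab, hbc, hda ▸ hcd⟩

/-- A chain of the relation `R` that cannot be prolonged at its last term. -/
structure IsRightMaximalChain (R : α → α → Prop) (l : List α) : Prop where
  isChain : l.IsChain R
  not_rel : ∀ c ∈ l.getLast?, ∀ b, ¬ R c b

theorem IsRightMaximalChain.tail {a b : α} {l : List α}
    (h : IsRightMaximalChain R (a :: b :: l)) : IsRightMaximalChain R (b :: l) :=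
  ⟨h.isChain.tail, by simpa only [List.getLast?_cons_cons] using h.not_rel⟩

theorem IsRightMaximalChain.eq_of_head?_eq (hR : Relator.RightUnique R) :
    ∀ {l l' : List α}, IsRightMaximalChain R l → IsRightMaximalChain R l' →
      l.head? = l'.head? → l = l'
  | [], [], _, _, _ => rfl
  | [a], [b], _, _, h => by simpa using h
  | [a], b :: c :: l', h₁, h₂, h => by
    obtain rfl : a = b := by simpa using h
    exact absurd (List.isChain_cons_cons.1 h₂.isChain).1 (h₁.not_rel a rfl c)
  | a :: c :: l, [b], h₁, h₂, h => by
    obtain rfl : a = b := by simpa using h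
    exact absurd (List.isChain_cons_cons.1 h₁.isChain).1 (h₂.not_rel a rfl c)
  | a :: c :: l, b :: d :: l', h₁, h₂, h => by
    obtain rfl : a = b := by simpa using h
    obtain rfl : c = d := hR (List.isChain_cons_cons.1 h₁.isChain).1
      (List.isChain_cons_cons.1 h₂.isChain).1
    rw [h₁.tail.eq_of_head?_eq hR h₂.tail rfl]

theorem IsRightMaximalChain.nodup (hR : Relator.RightUnique R) :
    ∀ {l : List α}, IsRightMaximalChain R l → l.Nodup
  | [], _ => .nil
  | [a], _ => List.nodup_singleton a
  | a :: b :: l, h => by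
    refine List.nodup_cons.2 ⟨fun ha => ?_, h.tail.nodup hR⟩
    obtain ⟨s, t, hst⟩ := List.append_of_mem ha
    -- A second occurrence of `a` starts a shorter maximal chain with the same head.
    have hsuffix : IsRightMaximalChain R (a :: t) := by
      have htail := hst ▸ h.tail
      exact ⟨htail.isChain.right_of_append,
        by simpa only [List.getLast?_append_cons] using htail.not_rel⟩
    have heq : t = b :: l := (List.cons.inj (hsuffix.eq_of_head?_eq hR h rfl)).2
    have hlength := congrArg List.length hst
    simp only [heq, List.length_append, List.length_cons] at hlength
    omega

theorem exists_maximal_chain_of_forall_not_rel (hR : Relator.RightUnique R) {s : Finset α}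
    (hs : ∀ x y, R x y → x ∈ s) {a : α} (ha : a ∈ s) (hlast : ∀ b, ¬ R a b) :
    ∃ l : List α, (∀ x ∈ l, x ∈ s) ∧ IsRightMaximalChain R l ∧ a ∈ l ∧
      ∀ c ∈ l.head?, ∀ d, ¬ R d c := by
  classical
  by_contra! hno
  have hlong : ∀ n : ℕ, ∃ l : List α, (∀ x ∈ l, x ∈ s) ∧ IsRightMaximalChain R l ∧ a ∈ l ∧
      n < l.length := by
    intro n
    induction n with
    | zero => exact ⟨[a], by simpa using ha, ⟨.singleton a, by simpa using hlast⟩, by simp, by simp⟩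
    | succ n ih =>
      obtain ⟨l, hls, hl, hal, hn⟩ := ih
      obtain ⟨c, hc, d, hdc⟩ := hno l hls hl hal
      obtain ⟨t, rfl⟩ := List.head?_eq_some_iff.1 hc
      refine ⟨d :: c :: t, List.forall_mem_cons.2 ⟨hs d c hdc, hls⟩,
        ⟨List.isChain_cons_cons.2 ⟨hdc, hl.isChain⟩, ?_⟩, List.mem_cons_of_mem d hal, ?_⟩
      · simpa only [List.getLast?_cons_cons] using hl.not_rel
      · simpa using hn
  obtain ⟨l, hls, hl, -, hlen⟩ := hlong s.card
  have hcard : l.toFinset.card ≤ s.card :=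
    Finset.card_le_card fun x hx => hls x (List.mem_toFinset.1 hx)
  rw [List.toFinset_card_of_nodup (hl.nodup hR)] at hcard
  omega

theorem mem_or_head?_eq_of_isChain (hR : Relator.LeftUnique R) {a b : α} (hab : R a b) :
    ∀ {l : List α}, l.IsChain R → b ∈ l → a ∈ l ∨ l.head? = some b
  | c :: l, hl, hb => by
    obtain ⟨hhead, htail⟩ := List.isChain_cons.1 hl
    rcases List.mem_cons.1 hb with rfl | hb
    · exact .inr rfl
    · rcases mem_or_head?_eq_of_isChain hR hab htail hb with ha | hhead'
      · exact .inl (List.mem_cons_of_mem c ha)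
      · exact .inl (List.mem_cons.2 (.inl (hR hab (hhead b hhead'))))

end Relations

section Quivers

variable {Q : QuivRel} {st : SigmaTau Q}

section Gentle

theorem IsGentle.nonempty (hg : IsGentle Q) : Q.V.Nonempty := hg.1

theorem IsGentle.ends_mem (hg : IsGentle Q) : ∀ a ∈ Q.A, Q.src a ∈ Q.V ∧ Q.tgt a ∈ Q.V := hg.2.1

theorem IsGentle.connected (hg : IsGentle Q) : Connected Q := hg.2.2.1

theorem SigmaTau.eq_of_src_eq (st : SigmaTau Q) {a b : ℕ} (ha : a ∈ Q.A) (hb : b ∈ Q.A)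
    (hsrc : Q.src a = Q.src b) (hσ : st.σ a = st.σ b) : a = b := by
  by_contra hne
  have hneg := st.σ_src a ha b hb hne hsrc
  have hpm := st.σ_pm b hb
  omega

theorem SigmaTau.eq_of_tgt_eq (st : SigmaTau Q) {a b : ℕ} (ha : a ∈ Q.A) (hb : b ∈ Q.A)
    (htgt : Q.tgt a = Q.tgt b) (hτ : st.τ a = st.τ b) : a = b := by
  by_contra hne
  have hneg := st.τ_tgt a ha b hb hne htgt
  have hpm := st.τ_pm b hb
  omega

theorem IsGentle.mem_rel_iff (hg : IsGentle Q) (st : SigmaTau Q) {a b : ℕ} :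
    (a, b) ∈ Q.rel ↔ a ∈ Q.A ∧ b ∈ Q.A ∧ Q.src a = Q.tgt b ∧ st.σ a = st.τ b := by
  obtain ⟨-, -, -, hrel, -⟩ := hg
  constructor
  · intro hab
    obtain ⟨ha, hb, hcomp⟩ := hrel _ hab
    exact ⟨ha, hb, hcomp, (st.rel_iff a ha b hb hcomp).1 hab⟩
  · rintro ⟨ha, hb, hcomp, hsign⟩
    exact (st.rel_iff a ha b hb hcomp).2 hsign

theorem IsGentle.rel_biUnique (hg : IsGentle Q) : Relator.BiUnique fun a b => (a, b) ∈ Q.rel := by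
  obtain ⟨-, -, -, hrel, -, -, -, -, hleft, hright, -⟩ := hg
  constructor
  · intro a a' b hab ha'b
    exact Finset.card_le_one.1 (hleft b (hrel _ hab).2.1)
      a (Finset.mem_filter.2 ⟨(hrel _ hab).1, hab⟩)
      a' (Finset.mem_filter.2 ⟨(hrel _ ha'b).1, ha'b⟩)
  · intro a b b' hab hab'
    exact Finset.card_le_one.1 (hright a (hrel _ hab).1)
      b (Finset.mem_filter.2 ⟨(hrel _ hab).2.1, hab⟩)
      b' (Finset.mem_filter.2 ⟨(hrel _ hab').2.1, hab'⟩)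

end Gentle

section MaximalAntipaths

/-- A maximal antipath of positive length, described by relations alone, without the signs. -/
structure IsMaximalAntipath (Q : QuivRel) (l : List ℕ) : Prop where
  ne_nil : l ≠ []
  mem_arrows : ∀ a ∈ l, a ∈ Q.A
  isRightMaximalChain : IsRightMaximalChain (fun a b => (a, b) ∈ Q.rel) l
  notMem_rel_head : ∀ c ∈ l.head?, ∀ a, (a, c) ∉ Q.rel

theorem inN_arrows_iff (hg : IsGentle Q) {l : List ℕ} :
    InN Q st (.arrows l) ↔ IsMaximalAntipath Q l := by
  rcases l with _ | ⟨c, v⟩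
  · exact ⟨fun h => absurd rfl h.1.1, fun h => absurd rfl h.ne_nil⟩
  have hlast : (c :: v).getLast! ∈ (c :: v).getLast? := by
    simp [List.getLast!_eq_getLast?_getD, List.getLast?_cons]
  have hlast_mem : (c :: v).getLast! ∈ c :: v := List.mem_of_getLast? hlast
  constructor
  · rintro ⟨⟨hne, hA, hchain⟩, hhead, hend⟩
    refine ⟨hne, hA, ⟨hchain, fun d hd b hdb => ?_⟩, ?_⟩
    · obtain rfl := Option.mem_unique hd hlast
      obtain ⟨-, hb, hcomp, hsign⟩ := (hg.mem_rel_iff st).1 hdb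
      exact hend ⟨b, hb, hcomp.symm, hsign.symm⟩
    · rintro _ ⟨⟩ a hac
      obtain ⟨ha, -, hcomp, hsign⟩ := (hg.mem_rel_iff st).1 hac
      exact hhead ⟨a, ha, hcomp, hsign⟩
  · rintro ⟨hne, hA, ⟨hchain, hend⟩, hhead⟩
    refine ⟨⟨hne, hA, hchain⟩, ?_, ?_⟩
    · rintro ⟨a, ha, hcomp, hsign⟩
      exact hhead c rfl a ((hg.mem_rel_iff st).2 ⟨ha, hA c List.mem_cons_self, hcomp, hsign⟩)
    · rintro ⟨b, hb, hcomp, hsign⟩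
      exact hend _ hlast b
        ((hg.mem_rel_iff st).2 ⟨hA _ hlast_mem, hb, hcomp.symm, hsign.symm⟩)

/-- The pair `(tω, τω)` in which an antipath `ω` ends. -/
def Thread.signedTarget (st : SigmaTau Q) (w : Thread) : ℕ × ℤ := (w.target Q, w.tauAnti st)

/-- The pairs `(x, ε)` of a vertex and a sign, the possible values of `Thread.signedTarget`. -/
def signedVertices (Q : QuivRel) : Finset (ℕ × ℤ) := Q.V ×ˢ {1, -1}

/-- The pairs `(sα, σα)` for the arrows `α`; gentleness makes them pairwise distinct, and a maximal
antipath ends in none of them. -/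
def signedSources (Q : QuivRel) (st : SigmaTau Q) : Finset (ℕ × ℤ) :=
  Q.A.image fun a => (Q.src a, st.σ a)

theorem card_signedVertices (Q : QuivRel) : (signedVertices Q).card = 2 * Q.V.card := by
  simp [signedVertices, mul_comm]

theorem card_signedSources (st : SigmaTau Q) : (signedSources Q st).card = Q.A.card :=
  Finset.card_image_of_injOn fun _ ha _ hb hab =>
    st.eq_of_src_eq ha hb (congrArg Prod.fst hab) (congrArg Prod.snd hab)

theorem signedSources_subset (st : SigmaTau Q) (hsrc : ∀ a ∈ Q.A, Q.src a ∈ Q.V) :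
    signedSources Q st ⊆ signedVertices Q :=
  Finset.image_subset_iff.2 fun a ha =>
    Finset.mem_product.2 ⟨hsrc a ha, by simpa using st.σ_pm a ha⟩

theorem mapsTo_signedTarget (hg : IsGentle Q) (st : SigmaTau Q) :
    Set.MapsTo (Thread.signedTarget st) {w | InN Q st w}
      ↑(signedVertices Q \ signedSources Q st) := by
  intro w hw
  refine Finset.mem_sdiff.2 ⟨?_, fun hsource => ?_⟩
  · match w, hw with
    | .triv x ε, hw =>
      exact Finset.mem_product.2
        ⟨hw.1.1, Finset.mem_insert.2 (hw.1.2.imp_right Finset.mem_singleton.2)⟩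
    | .arrows [], hw => exact absurd rfl hw.1.1
    | .arrows (c :: v), hw =>
      have hc : c ∈ Q.A := hw.1.2.1 c List.mem_cons_self
      exact Finset.mem_product.2 ⟨(hg.ends_mem c hc).2,
        Finset.mem_insert.2 ((st.τ_pm c hc).imp_right Finset.mem_singleton.2)⟩
  · obtain ⟨a, ha, haw⟩ := Finset.mem_image.1 hsource
    exact hw.2.1 ⟨a, ha, congrArg Prod.fst haw, congrArg Prod.snd haw⟩

theorem InN.triv_signedTarget_ne {x : ℕ} {ε : ℤ} {c : ℕ} {v : List ℕ}
    (htriv : InN Q st (.triv x ε)) (hc : c ∈ Q.A) :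
    (Thread.triv x ε).signedTarget st ≠ (Thread.arrows (c :: v)).signedTarget st :=
  fun heq => htriv.2.2 ⟨c, hc, (congrArg Prod.fst heq).symm, (congrArg Prod.snd heq).symm⟩

theorem injOn_signedTarget (hg : IsGentle Q) (st : SigmaTau Q) :
    Set.InjOn (Thread.signedTarget st) {w | InN Q st w} := by
  intro w hw w' hw' heq
  match w, w', hw, hw' with
  | .arrows [], _, hw, _ => exact absurd rfl hw.1.1
  | _, .arrows [], _, hw' => exact absurd rfl hw'.1.1
  | .triv x ε, .triv x' ε', _, _ =>
    exact congrArg₂ Thread.triv (congrArg Prod.fst heq) (congrArg Prod.snd heq)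
  | .triv x ε, .arrows (c :: v), hw, hw' =>
    exact absurd heq (hw.triv_signedTarget_ne (hw'.1.2.1 c List.mem_cons_self))
  | .arrows (c :: v), .triv x ε, hw, hw' =>
    exact absurd heq.symm (hw'.triv_signedTarget_ne (hw.1.2.1 c List.mem_cons_self))
  | .arrows (c :: v), .arrows (d :: u), hw, hw' =>
    obtain rfl : c = d := st.eq_of_tgt_eq (hw.1.2.1 c List.mem_cons_self)
      (hw'.1.2.1 d List.mem_cons_self) (congrArg Prod.fst heq) (congrArg Prod.snd heq)
    rw [((inN_arrows_iff hg).1 hw).isRightMaximalChain.eq_of_head?_eq hg.rel_biUnique.2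
      ((inN_arrows_iff hg).1 hw').isRightMaximalChain rfl]

theorem finite_setOf_inN (hg : IsGentle Q) (st : SigmaTau Q) : {w | InN Q st w}.Finite :=
  .of_injOn (mapsTo_signedTarget hg st) (injOn_signedTarget hg st) (Finset.finite_toSet _)

theorem ncard_inN_add_card_arrows_le (hg : IsGentle Q) (st : SigmaTau Q) :
    {w | InN Q st w}.ncard + Q.A.card ≤ 2 * Q.V.card := by
  have hinj := Set.ncard_le_ncard_of_injOn _ (mapsTo_signedTarget hg st)
    (injOn_signedTarget hg st) (Finset.finite_toSet _)
  have hsdiff := Finset.card_sdiff_add_card_eq_card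
    (signedSources_subset st fun a ha => (hg.ends_mem a ha).1)
  rw [card_signedSources, card_signedVertices] at hsdiff
  rw [Set.ncard_coe_finset] at hinj
  omega

/-- The list of arrows of a thread, empty for the trivial ones. -/
def Thread.arrowList : Thread → List ℕ
  | .triv _ _ => []
  | .arrows l => l

theorem Thread.length_arrowList : ∀ w : Thread, w.arrowList.length = w.len
  | .triv _ _ => rfl
  | .arrows _ => rfl

theorem finite_setOf_inC (Q : QuivRel) (st : SigmaTau Q) : {a | InC Q st a}.Finite :=
  Q.A.finite_toSet.subset fun _ ha => ha.1

theorem card_arrows_le (hg : IsGentle Q) (st : SigmaTau Q) :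
    Q.A.card ≤ (∑ᶠ w ∈ {w | InN Q st w}, Thread.len w) + {a | InC Q st a}.ncard := by
  have hC := finite_setOf_inC Q st
  have hcover : Q.A ⊆
      ((finite_setOf_inN hg st).toFinset.biUnion fun w => w.arrowList.toFinset) ∪
        hC.toFinset := by
    intro a ha
    by_cases haC : InC Q st a
    · exact Finset.mem_union_right _ (hC.mem_toFinset.2 haC)
    · obtain ⟨l, hl, hal⟩ : ∃ l, InN Q st (.arrows l) ∧ a ∈ l := by
        simpa only [InC, ha, true_and, not_not] using haC
      exact Finset.mem_union_left _ (Finset.mem_biUnion.2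
        ⟨.arrows l, (Set.Finite.mem_toFinset _).2 hl, List.mem_toFinset.2 hal⟩)
  have hthreads : ((finite_setOf_inN hg st).toFinset.biUnion fun w => w.arrowList.toFinset).card ≤
      ∑ w ∈ (finite_setOf_inN hg st).toFinset, w.len :=
    Finset.card_biUnion_le.trans (Finset.sum_le_sum fun w _ =>
      w.length_arrowList ▸ List.toFinset_card_le _)
  rw [finsum_mem_eq_finite_toFinset_sum _ (finite_setOf_inN hg st), Set.ncard_eq_toFinset_card _ hC]
  calc Q.A.card ≤ _ := (Finset.card_le_card hcover).trans (Finset.card_union_le _ _)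
    _ ≤ _ := Nat.add_le_add_right hthreads _

end MaximalAntipaths

section Orbits

theorem InC.exists_rel (hg : IsGentle Q) {a : ℕ} (ha : InC Q st a) : ∃ b, (a, b) ∈ Q.rel := by
  by_contra! hlast
  obtain ⟨l, hlA, hl, hal, hhead⟩ := exists_maximal_chain_of_forall_not_rel hg.rel_biUnique.2
    (fun x y hxy => ((hg.mem_rel_iff st).1 hxy).1) ha.1 hlast
  exact ha.2 ⟨l, (inN_arrows_iff hg).2 ⟨List.ne_nil_of_mem hal, hlA, hl, hhead⟩, hal⟩

theorem InC.of_rel (hg : IsGentle Q) {a b : ℕ} (ha : InC Q st a) (hab : (a, b) ∈ Q.rel) :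
    InC Q st b := by
  refine ⟨((hg.mem_rel_iff st).1 hab).2.1, ?_⟩
  rintro ⟨l, hl, hbl⟩
  have hmax := (inN_arrows_iff hg).1 hl
  rcases mem_or_head?_eq_of_isChain hg.rel_biUnique.1 hab hmax.isRightMaximalChain.isChain hbl with
    hal | hhead
  · exact ha.2 ⟨l, hl, hal⟩
  · exact hmax.notMem_rel_head b hhead a hab

theorem psiRel_iff (hg : IsGentle Q) {a b : ℕ} :
    PsiRel Q st a b ↔ InC Q st a ∧ (a, b) ∈ Q.rel := by
  constructor
  · rintro ⟨ha, hb, hcomp, hsign⟩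
    exact ⟨ha, (hg.mem_rel_iff st).2 ⟨ha.1, hb.1, hcomp.symm, hsign.symm⟩⟩
  · rintro ⟨ha, hab⟩
    obtain ⟨-, -, hcomp, hsign⟩ := (hg.mem_rel_iff st).1 hab
    exact ⟨ha, ha.of_rel hg hab, hcomp.symm, hsign.symm⟩

theorem COrbit.subset {O : Set ℕ} (hO : COrbit Q st O) : O ⊆ {a | InC Q st a} := by
  obtain ⟨a, ha, rfl⟩ := hO
  exact fun b hab => (iff_of_eqvGen (fun _ _ h => iff_of_true h.1 h.2.1) hab).1 ha

theorem NOrbit.subset {O : Set Thread} (hO : NOrbit Q st O) : O ⊆ {w | InN Q st w} := by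
  obtain ⟨w, hw, rfl⟩ := hO
  exact fun w' hww' => (iff_of_eqvGen (fun _ _ h => iff_of_true h.1 h.2.1) hww').1 hw

theorem COrbit.exists_triangleSet (hg : IsGentle Q) {O : Set ℕ} (hO : COrbit Q st O)
    (hcard : O.ncard = 3) : ∃ T : Finset ℕ, TriangleSet Q T ∧ (T : Set ℕ) = O := by
  have hsub := hO.subset
  obtain ⟨a, -, rfl⟩ := hO
  have hΨ : Relator.BiUnique (PsiRel Q st) :=
    ⟨fun _ _ _ h h' => hg.rel_biUnique.1 ((psiRel_iff hg).1 h).2 ((psiRel_iff hg).1 h').2,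
      fun _ _ _ h h' => hg.rel_biUnique.2 ((psiRel_iff hg).1 h).2 ((psiRel_iff hg).1 h').2⟩
  have hsucc : ∀ x, Relation.EqvGen (PsiRel Q st) a x → ∃ y, PsiRel Q st x y := fun x hx =>
    (InC.exists_rel hg (hsub hx)).imp fun y hxy => (psiRel_iff hg).2 ⟨hsub hx, hxy⟩
  obtain ⟨b, c, horbit, ⟨hab, hbc, hac⟩, rab, rbc, rca⟩ :=
    exists_three_cycle_of_ncard_eq_three hΨ hsucc hcard
  refine ⟨{a, b, c}, ⟨a, b, c, rfl, ⟨rab.1.1, rbc.1.1, rca.1.1, hab, hbc, hac, ?_⟩, ?_⟩, ?_⟩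
  · exact ⟨rab.2.2.1.symm, rbc.2.2.1.symm, rca.2.2.1.symm⟩
  · exact ⟨((psiRel_iff hg).1 rab).2, ((psiRel_iff hg).1 rbc).2, ((psiRel_iff hg).1 rca).2⟩
  · rw [horbit]
    push_cast
    rfl

theorem finite_setOf_cOrbit (Q : QuivRel) (st : SigmaTau Q) : {O | COrbit Q st O}.Finite :=
  (finite_setOf_inC Q st).finite_subsets.subset fun _ hO => hO.subset

theorem finite_setOf_nOrbit (hg : IsGentle Q) (st : SigmaTau Q) : {O | NOrbit Q st O}.Finite :=
  (finite_setOf_inN hg st).finite_subsets.subset fun _ hO => hO.subset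

theorem NOrbit.pN_ne_zero (hg : IsGentle Q) {O : Set Thread} (hO : NOrbit Q st O) : pN O ≠ 0 := by
  have hfin : O.Finite := (finite_setOf_inN hg st).subset hO.subset
  obtain ⟨w, -, rfl⟩ := hO
  exact Set.ncard_ne_zero_of_mem (Relation.EqvGen.refl w) hfin

end Orbits

section Invariant

theorem fInv_zero_left (hg : IsGentle Q) (st : SigmaTau Q) (q : ℕ) :
    fInv Q st (0, q) = {O : Set ℕ | COrbit Q st O ∧ O.ncard = q}.ncard := by
  have hN : {O : Set Thread | NOrbit Q st O ∧ pN O = 0 ∧ qN O = q} = ∅ :=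
    Set.eq_empty_of_forall_notMem fun O hO => hO.1.pN_ne_zero hg hO.2.1
  simp only [fInv, hN, Set.ncard_empty, true_and, zero_add]

theorem fInv_of_ne_zero (st : SigmaTau Q) {p : ℕ} (hp : p ≠ 0) (q : ℕ) :
    fInv Q st (p, q) = {O : Set Thread | NOrbit Q st O ∧ pN O = p ∧ qN O = q}.ncard := by
  have hC : {O : Set ℕ | COrbit Q st O ∧ p = 0 ∧ O.ncard = q} = ∅ :=
    Set.eq_empty_of_forall_notMem fun O hO => hp hO.2.1
  simp only [fInv, hC, Set.ncard_empty, add_zero]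

theorem COrbit.fInv_ne_zero (hg : IsGentle Q) {O : Set ℕ} (hO : COrbit Q st O) :
    fInv Q st (0, O.ncard) ≠ 0 := by
  rw [fInv_zero_left hg]
  exact Set.ncard_ne_zero_of_mem (a := O) ⟨hO, rfl⟩
    ((finite_setOf_cOrbit Q st).subset fun _ h => h.1)

theorem NOrbit.fInv_ne_zero (hg : IsGentle Q) {O : Set Thread} (hO : NOrbit Q st O) :
    fInv Q st (pN O, qN O) ≠ 0 := by
  rw [fInv_of_ne_zero st (hO.pN_ne_zero hg)]
  exact Set.ncard_ne_zero_of_mem (a := O) ⟨hO, rfl, rfl⟩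
    ((finite_setOf_nOrbit hg st).subset fun _ h => h.1)

variable {k m n p : ℕ}

theorem COrbit.ncard_eq (hg : IsGentle Q) (hn : n ≠ 0)
    (hf : ∀ x, fInv Q st x = m * charFn 0 k x + charFn n p x) {O : Set ℕ} (hO : COrbit Q st O) :
    O.ncard = k := by
  by_contra hne
  apply hO.fInv_ne_zero hg
  simp [hf, charFn, hne, hn.symm]

theorem NOrbit.pN_eq_and_qN_eq (hg : IsGentle Q)
    (hf : ∀ x, fInv Q st x = m * charFn 0 k x + charFn n p x) {O : Set Thread}
    (hO : NOrbit Q st O) : pN O = n ∧ qN O = p := by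
  by_contra hne
  apply hO.fInv_ne_zero hg
  simp only [hf, charFn, Prod.mk.injEq, hO.pN_ne_zero hg, hne, false_and, if_false, mul_zero]

theorem ncard_cOrbit_eq (hg : IsGentle Q) (hn : n ≠ 0)
    (hf : ∀ x, fInv Q st x = m * charFn 0 k x + charFn n p x) :
    {O : Set ℕ | COrbit Q st O ∧ O.ncard = k}.ncard = m := by
  rw [← fInv_zero_left hg, hf]
  simp [charFn, hn.symm]

theorem ncard_inC_le (hg : IsGentle Q) (hn : n ≠ 0)
    (hf : ∀ x, fInv Q st x = m * charFn 0 k x + charFn n p x) :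
    {a | InC Q st a}.ncard ≤ m * k := by
  have hfin : {O : Set ℕ | COrbit Q st O ∧ O.ncard = k}.Finite :=
    (finite_setOf_cOrbit Q st).subset fun _ h => h.1
  have hcover : {a | InC Q st a} = ⋃ O ∈ hfin.toFinset, O := by
    ext a
    simp only [Set.Finite.mem_toFinset, Set.mem_iUnion]
    constructor
    · intro ha
      have hO : COrbit Q st {b | Relation.EqvGen (PsiRel Q st) a b} := ⟨a, ha, rfl⟩
      exact ⟨_, ⟨hO, hO.ncard_eq hg hn hf⟩, .refl a⟩
    · rintro ⟨O, hO, haO⟩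
      exact hO.1.subset haO
  calc {a | InC Q st a}.ncard ≤ ∑ O ∈ hfin.toFinset, O.ncard :=
        hcover ▸ Finset.set_ncard_biUnion_le _ _
    _ = m * k := by
        rw [Finset.sum_const_nat fun O hO => (hfin.mem_toFinset.1 hO).2,
          ← Set.ncard_eq_toFinset_card _ hfin, ncard_cOrbit_eq hg hn hf]

theorem nOrbit_setOf_inN (hg : IsGentle Q) (hn : n ≠ 0)
    (hf : ∀ x, fInv Q st x = m * charFn 0 k x + charFn n p x) :
    NOrbit Q st {w | InN Q st w} := by
  have hone : {O | NOrbit Q st O ∧ pN O = n ∧ qN O = p}.ncard = 1 := by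
    rw [← fInv_of_ne_zero st hn, hf]
    simp [charFn, hn]
  obtain ⟨O, hO⟩ := Set.ncard_eq_one.1 hone
  have hONorbit : NOrbit Q st O := (hO ▸ Set.mem_singleton O : O ∈ {O | _ ∧ _}).1
  have hcover : {w | InN Q st w} ⊆ O := by
    intro w hw
    have hw' : NOrbit Q st {w' | Relation.EqvGen (PhiRel Q st) w w'} := ⟨w, hw, rfl⟩
    have heq : {w' | Relation.EqvGen (PhiRel Q st) w w'} ∈ ({O} : Set (Set Thread)) :=
      hO ▸ ⟨hw', hw'.pN_eq_and_qN_eq hg hf⟩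
    exact heq ▸ Relation.EqvGen.refl w
  rwa [hcover.antisymm hONorbit.subset]

theorem two_mul_card_arrows_add_le (hg : IsGentle Q) (hn : n ≠ 0)
    (hf : ∀ x, fInv Q st x = m * charFn 0 k x + charFn n p x) :
    2 * Q.A.card + n ≤ 2 * Q.V.card + p + m * k := by
  obtain ⟨hpN, hqN⟩ := (nOrbit_setOf_inN hg hn hf).pN_eq_and_qN_eq hg hf
  rw [pN] at hpN
  rw [qN] at hqN
  have hvertices := ncard_inN_add_card_arrows_le hg st
  have harrows := card_arrows_le hg st
  have hC := ncard_inC_le hg hn hf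
  omega

end Invariant

section Triangles

theorem IsTriangleTriple.rotate {a b c : ℕ} (h : IsTriangleTriple Q a b c) :
    IsTriangleTriple Q b c a := by
  obtain ⟨⟨ha, hb, hc, hab, hbc, hac, cab, cbc, cca⟩, rab, rbc, rca⟩ := h
  exact ⟨⟨hb, hc, ha, hbc, hac.symm, hab.symm, cbc, cca, cab⟩, rbc, rca, rab⟩

theorem TriangleSet.exists_triple_of_mem {T : Finset ℕ} (hT : TriangleSet Q T) {a : ℕ}
    (ha : a ∈ T) : ∃ b c, T = {a, b, c} ∧ IsTriangleTriple Q a b c := by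
  obtain ⟨x, y, z, rfl, h⟩ := hT
  simp only [Finset.mem_insert, Finset.mem_singleton] at ha
  rcases ha with rfl | rfl | rfl
  · exact ⟨y, z, rfl, h⟩
  · exact ⟨z, x, by grind, h.rotate⟩
  · exact ⟨x, y, by grind, h.rotate.rotate⟩

theorem TriangleSet.eq_of_mem (hg : IsGentle Q) {T T' : Finset ℕ} (hT : TriangleSet Q T)
    (hT' : TriangleSet Q T') {a : ℕ} (ha : a ∈ T) (ha' : a ∈ T') : T = T' := by
  obtain ⟨b, c, rfl, -, rab, rbc, -⟩ := hT.exists_triple_of_mem ha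
  obtain ⟨b', c', rfl, -, rab', rbc', -⟩ := hT'.exists_triple_of_mem ha'
  obtain rfl : b = b' := hg.rel_biUnique.2 rab rab'
  obtain rfl : c = c' := hg.rel_biUnique.2 rbc rbc'
  rfl

theorem TriangleSet.subset {T : Finset ℕ} (hT : TriangleSet Q T) : T ⊆ Q.A := fun _ ha =>
  have ⟨_, _, _, h⟩ := hT.exists_triple_of_mem ha
  h.1.1

theorem fInv_zero_three_le (hg : IsGentle Q) (st : SigmaTau Q) :
    fInv Q st (0, 3) ≤ {T | TriangleSet Q T}.ncard := by
  have hfin : {T | TriangleSet Q T}.Finite :=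
    Q.A.powerset.finite_toSet.subset fun _ hT => Finset.mem_powerset.2 hT.subset
  rw [fInv_zero_left hg]
  calc _ ≤ ((fun T : Finset ℕ => (T : Set ℕ)) '' {T | TriangleSet Q T}).ncard :=
        Set.ncard_le_ncard (fun _ hO => hO.1.exists_triangleSet hg hO.2) (hfin.image _)
    _ = _ := Set.ncard_image_of_injective _ Finset.coe_injective

theorem ClassA.card_arrows_add_one_le (hA : ClassA Q st) :
    Q.A.card + 1 ≤ Q.V.card + {T | TriangleSet Q T}.ncard := by
  obtain ⟨hg, m, p, hf⟩ := hA
  have hcount := two_mul_card_arrows_add_le hg (by omega) hf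
  have hm : fInv Q st (0, 3) = m := by simp [hf, charFn]
  have htriangles := fInv_zero_three_le hg st
  omega

end Triangles

section Connectivity

instance : Std.Symm (Adj Q) := ⟨fun _ _ ⟨a, ha, h⟩ => ⟨a, ha, h.symm⟩⟩

/-- The simple graph underlying a quiver, without loops and multiplicities. -/
def underlyingGraph (Q : QuivRel) : SimpleGraph Q.V := SimpleGraph.fromRel fun x y => Adj Q x y

theorem underlyingGraph_adj {x y : Q.V} : (underlyingGraph Q).Adj x y ↔ x ≠ y ∧ Adj Q x y := by
  rw [underlyingGraph, SimpleGraph.fromRel_adj, or_iff_left_of_imp symm]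

theorem exists_reachable_underlyingGraph (hends : ∀ a ∈ Q.A, Q.src a ∈ Q.V ∧ Q.tgt a ∈ Q.V)
    (x : Q.V) {y : ℕ} (hxy : Relation.ReflTransGen (Adj Q) x y) :
    ∃ hy : y ∈ Q.V, (underlyingGraph Q).Reachable x ⟨y, hy⟩ := by
  induction hxy with
  | refl => exact ⟨x.2, .refl _⟩
  | @tail y z _ hyz ih =>
    obtain ⟨hy, hreach⟩ := ih
    have hz : z ∈ Q.V := by
      obtain ⟨a, ha, ⟨-, rfl⟩ | ⟨rfl, -⟩⟩ := hyz
      exacts [(hends a ha).2, (hends a ha).1]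
    refine ⟨hz, hreach.trans ?_⟩
    by_cases heq : y = z
    · subst heq
      exact .refl _
    · exact (underlyingGraph_adj.2 ⟨by simpa using heq, hyz⟩).reachable

theorem underlyingGraph_connected (hne : Q.V.Nonempty)
    (hends : ∀ a ∈ Q.A, Q.src a ∈ Q.V ∧ Q.tgt a ∈ Q.V) (hconn : Connected Q) :
    (underlyingGraph Q).Connected :=
  have := hne.to_subtype
  ⟨fun x y => (exists_reachable_underlyingGraph hends x (hconn x x.2 y y.2)).2⟩

theorem ncard_edgeSet_underlyingGraph_le (Q : QuivRel) :
    (underlyingGraph Q).edgeSet.ncard ≤ Q.A.card := by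
  have hmaps : Set.MapsTo (Sym2.map Subtype.val) (underlyingGraph Q).edgeSet
      ↑(Q.A.image fun a => s(Q.src a, Q.tgt a)) := by
    intro e he
    induction e using Sym2.ind with
    | _ x y =>
      obtain ⟨-, a, ha, hends⟩ := underlyingGraph_adj.1 ((SimpleGraph.mem_edgeSet _).1 he)
      exact Finset.mem_image.2 ⟨a, ha, Sym2.eq_iff.2 hends⟩
  calc (underlyingGraph Q).edgeSet.ncard
      ≤ (↑(Q.A.image fun a => s(Q.src a, Q.tgt a)) : Set (Sym2 ℕ)).ncard :=
        Set.ncard_le_ncard_of_injOn _ hmaps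
          (Sym2.map.injective Subtype.val_injective).injOn (Finset.finite_toSet _)
    _ ≤ Q.A.card := (Set.ncard_coe_finset _).trans_le Finset.card_image_le

theorem Connected.card_vertices_le (hconn : Connected Q) (hne : Q.V.Nonempty)
    (hends : ∀ a ∈ Q.A, Q.src a ∈ Q.V ∧ Q.tgt a ∈ Q.V) : Q.V.card ≤ Q.A.card + 1 := by
  have hbound := (underlyingGraph_connected hne hends hconn).card_vert_le_card_edgeSet_add_one
  rw [Nat.card_eq_finsetCard, Nat.card_coe_set_eq] at hbound
  exact hbound.trans (Nat.add_le_add_right (ncard_edgeSet_underlyingGraph_le Q) 1)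

end Connectivity

section Deletion

variable {S : Finset ℕ}

theorem adj_deleteArrows {a : ℕ} (ha : a ∈ Q.A) (haS : a ∉ S) :
    Adj (deleteArrows Q S) (Q.tgt a) (Q.src a) :=
  ⟨a, Finset.mem_sdiff.2 ⟨ha, haS⟩, .inr ⟨rfl, rfl⟩⟩

theorem IsTriangleTriple.reflTransGen_adj_deleteArrows {a b c : ℕ} (h : IsTriangleTriple Q a b c)
    (hb : b ∉ S) (hc : c ∉ S) :
    Relation.ReflTransGen (Adj (deleteArrows Q S)) (Q.src a) (Q.tgt a) := by
  obtain ⟨⟨-, hbA, hcA, -, -, -, hab, hbc, hca⟩, -⟩ := h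
  rw [hab, ← hca]
  exact .tail (.single (adj_deleteArrows hbA hb)) (hbc ▸ adj_deleteArrows hcA hc)

theorem connected_deleteArrows (hconn : Connected Q)
    (hS : ∀ a ∈ S, Relation.ReflTransGen (Adj (deleteArrows Q S)) (Q.src a) (Q.tgt a)) :
    Connected (deleteArrows Q S) := by
  have hjoin : ∀ a ∈ Q.A,
      Relation.ReflTransGen (Adj (deleteArrows Q S)) (Q.src a) (Q.tgt a) := fun a ha =>
    if haS : a ∈ S then hS a haS else .single (symm (adj_deleteArrows ha haS))
  refine fun x hx y hy => Relation.reflTransGen_closed ?_ _ _ (hconn x hx y hy)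
  rintro _ _ ⟨a, ha, ⟨rfl, rfl⟩ | ⟨rfl, rfl⟩⟩
  · exact hjoin a ha
  · exact symm (hjoin a ha)

theorem connected_deleteArrows_of_triangleSet (hconn : Connected Q)
    (hS : ∀ a ∈ S, ∃ T, TriangleSet Q T ∧ T ∩ S = {a}) : Connected (deleteArrows Q S) := by
  refine connected_deleteArrows hconn fun a haS => ?_
  obtain ⟨T, hT, hTS⟩ := hS a haS
  have honly : ∀ x ∈ T, x ≠ a → x ∉ S := fun x hx hxa hxS =>
    hxa (Finset.mem_singleton.1 (hTS ▸ Finset.mem_inter.2 ⟨hx, hxS⟩))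
  have haT : a ∈ T := (Finset.mem_inter.1 (hTS ▸ Finset.mem_singleton_self a)).1
  obtain ⟨b, c, rfl, h⟩ := hT.exists_triple_of_mem haT
  have ⟨_, _, _, hab, _, hac, _⟩ := h.1
  exact h.reflTransGen_adj_deleteArrows (honly b (by simp) hab.symm) (honly c (by simp) hac.symm)

theorem mem_rel_deleteArrows {a b : ℕ} (ha : a ∈ (deleteArrows Q S).A)
    (hb : b ∈ (deleteArrows Q S).A) : (a, b) ∈ (deleteArrows Q S).rel ↔ (a, b) ∈ Q.rel := by
  simp only [deleteArrows, Finset.mem_sdiff, Finset.mem_filter] at ha hb ⊢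
  tauto

theorem card_filter_deleteArrows_le {p q : ℕ → Prop} [DecidablePred p] [DecidablePred q]
    (hpq : ∀ a ∈ (deleteArrows Q S).A, p a → q a) :
    ((deleteArrows Q S).A.filter p).card ≤ (Q.A.filter q).card :=
  Finset.card_le_card fun a ha =>
    have ⟨haA, hpa⟩ := Finset.mem_filter.1 ha
    Finset.mem_filter.2 ⟨Finset.sdiff_subset haA, hpq a haA hpa⟩

theorem hasRelSubpath_deleteArrows {l : List ℕ} (h : HasRelSubpath Q l)
    (hl : ∀ a ∈ l, a ∈ (deleteArrows Q S).A) : HasRelSubpath (deleteArrows Q S) l := by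
  obtain ⟨a, b, hab, hsub⟩ := h
  exact ⟨a, b, (mem_rel_deleteArrows (hl a (hsub.subset (by simp)))
    (hl b (hsub.subset (by simp)))).2 hab, hsub⟩

theorem isGentle_deleteArrows (hg : IsGentle Q) (hconn : Connected (deleteArrows Q S)) :
    IsGentle (deleteArrows Q S) := by
  obtain ⟨hne, hends, -, hrel, hsrc, htgt, hleft, hright, hleftRel, hrightRel, n, hn⟩ := hg
  have hA : (deleteArrows Q S).A ⊆ Q.A := Finset.sdiff_subset
  refine ⟨hne, fun a ha => hends a (hA ha), hconn, fun ρ hρ => ?_,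
    fun x => (card_filter_deleteArrows_le fun _ _ h => h).trans (hsrc x),
    fun x => (card_filter_deleteArrows_le fun _ _ h => h).trans (htgt x),
    fun a ha => (card_filter_deleteArrows_le fun b hb h => ?_).trans (hleft a (hA ha)),
    fun a ha => (card_filter_deleteArrows_le fun b hb h => ?_).trans (hright a (hA ha)),
    fun a ha => (card_filter_deleteArrows_le fun b hb h => ?_).trans (hleftRel a (hA ha)),
    fun a ha => (card_filter_deleteArrows_le fun b hb h => ?_).trans (hrightRel a (hA ha)),
    n, fun l hl hlen => ?_⟩
  · obtain ⟨hρQ, h₁, h₂⟩ := Finset.mem_filter.1 hρ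
    obtain ⟨hA₁, hA₂, hcomp⟩ := hrel ρ hρQ
    exact ⟨Finset.mem_sdiff.2 ⟨hA₁, h₁⟩, Finset.mem_sdiff.2 ⟨hA₂, h₂⟩, hcomp⟩
  · exact h.imp_right (mt (mem_rel_deleteArrows hb ha).2)
  · exact h.imp_right (mt (mem_rel_deleteArrows ha hb).2)
  · exact (mem_rel_deleteArrows hb ha).1 h
  · exact (mem_rel_deleteArrows ha hb).1 h
  · exact hasRelSubpath_deleteArrows
      (hn l ⟨hl.1, fun a ha => hA (hl.2.1 a ha), hl.2.2⟩ hlen) hl.2.1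

theorem ClassA.isGentle_and_treeType_deleteArrows (hA : ClassA Q st)
    (hS : ∀ a ∈ S, ∃ T, TriangleSet Q T ∧ T ∩ S = {a})
    (hcard : {T | TriangleSet Q T}.ncard ≤ S.card) :
    IsGentle (deleteArrows Q S) ∧ TreeType (deleteArrows Q S) := by
  have hconn := connected_deleteArrows_of_triangleSet hA.1.connected hS
  have hg := isGentle_deleteArrows hA.1 hconn
  have hSA : S ⊆ Q.A := fun a ha =>
    have ⟨_, hT, hTS⟩ := hS a ha
    hT.subset (Finset.mem_inter.1 (hTS ▸ Finset.mem_singleton_self a)).1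
  have hlower : (deleteArrows Q S).A.card + 1 ≤ Q.V.card := by
    have harrows : (deleteArrows Q S).A.card + S.card = Q.A.card :=
      Finset.card_sdiff_add_card_eq_card hSA
    have hinvariant := hA.card_arrows_add_one_le
    omega
  exact ⟨hg, (hconn.card_vertices_le hg.nonempty hg.ends_mem).antisymm hlower⟩

end Deletion

end Quivers

/-- Let `𝚫 ∈ 𝒜` and let `𝒪₁, …, 𝒪_m` be *all* the pairwise
distinct triangles in `𝚫`.  Removing one arrow from each triangle yields a
gentle quiver of tree type. -/
theorem stmt9 (Q : QuivRel) (st : SigmaTau Q) (hA : ClassA Q st)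
    (m : ℕ) (O : Fin m → Finset ℕ)
    (hOtri : ∀ i, TriangleSet Q (O i)) (hOinj : Function.Injective O)
    (hall : ∀ T : Finset ℕ, TriangleSet Q T → ∃ i, T = O i)
    (α : Fin m → ℕ) (hα : ∀ i, α i ∈ O i) :
    IsGentle (deleteArrows Q (Finset.image α Finset.univ)) ∧
    TreeType (deleteArrows Q (Finset.image α Finset.univ)) := by
  have hdisj : ∀ {i j a}, a ∈ O i → a ∈ O j → i = j := fun {i j _} hi hj =>
    hOinj ((hOtri i).eq_of_mem hA.1 (hOtri j) hi hj)
  have hαinj : Function.Injective α := fun i j hij => hdisj (hα i) (hij ▸ hα j)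
  have hrange : {T | TriangleSet Q T} = Set.range O :=
    Set.Subset.antisymm (fun T hT => (hall T hT).imp fun _ => Eq.symm)
      (Set.range_subset_iff.2 hOtri)
  refine hA.isGentle_and_treeType_deleteArrows (fun a ha => ?_) ?_
  · obtain ⟨i, -, rfl⟩ := Finset.mem_image.1 ha
    refine ⟨O i, hOtri i, Finset.eq_singleton_iff_unique_mem.2
      ⟨Finset.mem_inter.2 ⟨hα i, ha⟩, fun x hx => ?_⟩⟩
    obtain ⟨hxi, hxS⟩ := Finset.mem_inter.1 hx
    obtain ⟨j, -, rfl⟩ := Finset.mem_image.1 hxS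
    rw [hdisj hxi (hα j)]
  · rw [hrange, Set.ncard_range_of_injective hOinj, Finset.card_image_of_injective _ hαinj]
    simp

end GentleQuiv
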